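/- For a positive integer r, the density ρ(x) = (1/(πx)) · x^{1/(r+1)} sin(π/(r+1)) / (1 + 2x^{1/(r+1)} cos(π/(r+1)) + x^{2/(r+1)}) satisfies ∫_0^∞ λ ρ(λ)/(λ + z) dλ = 1/(1 + z^{1/(r+1)}) for all real z > 0. -/

import Mathlib

/-! In the logarithmic coordinate `u = log λ` the plane slit along the negative axis is the strip
`|im u| < π`, and `F u = 1 / (1 + exp (u / (r + 1)))` is holomorphic up to its edges, with limits
`1` and `0` at its two ends. Let `b = log z`. Since `1 - exp (b - u)` takes the same value
`1 + exp (b - x)` at `u = x ± πi`, Cauchy's theorem for `(F u - F b) / (1 - exp (b - u))`, whose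
singularity at `b` is removable, recovers `F b` from the jump of `F` between the two edges. This
jump is `2πi λ ρ(λ)` with `λ = exp x`. -/

open Filter Topology MeasureTheory Complex
open scoped Real

section Strip

variable {E : Type*} [NormedAddCommGroup E] [CompleteSpace E] {f : ℂ → E} {c d : ℝ} {p q : E}

theorem tendsto_intervalIntegral_vertical [NormedSpace ℝ E] {l : Filter ℝ}
    [l.IsCountablyGenerated] (hf : ContinuousOn f (im ⁻¹' Set.uIcc c d))
    (hl : Tendsto f (comap re l ⊓ 𝓟 (im ⁻¹' Set.uIcc c d)) (𝓝 p)) :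
    Tendsto (fun x : ℝ ↦ ∫ y in c..d, f (x + y * I)) l (𝓝 ((d - c) • p)) := by
  have hcont (x : ℝ) : ContinuousOn (fun y : ℝ ↦ f (x + y * I)) (Set.uIcc c d) :=
    hf.comp (by fun_prop) fun y hy ↦ by simpa using hy
  have hunif : TendstoUniformlyOn (fun (x y : ℝ) ↦ f (x + y * I)) (fun _ ↦ p) l
      (Set.uIcc c d) := by
    have hpath : Tendsto (fun v : ℝ × ℝ ↦ (v.1 + v.2 * I : ℂ)) (l ×ˢ 𝓟 (Set.uIcc c d))
        (comap re l ⊓ 𝓟 (im ⁻¹' Set.uIcc c d)) := by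
      refine tendsto_inf.2 ⟨tendsto_comap_iff.2 (tendsto_fst.congr fun v ↦ by simp), ?_⟩
      exact tendsto_principal.2 ((tendsto_snd.eventually (mem_principal_self _)).mono
        fun v (hv : v.2 ∈ Set.uIcc c d) ↦ by simpa using hv)
    exact tendstoUniformlyOn_iff_tendsto.2 (Uniform.tendsto_nhds_right.1 (hl.comp hpath))
  simpa using hunif.tendsto_intervalIntegral_of_continuousOn (μ := volume) (.of_forall hcont)

theorem tendsto_intervalIntegral_sub_of_differentiableOn_strip [NormedSpace ℂ E]
    (hf : DifferentiableOn ℂ f (im ⁻¹' Set.uIcc c d))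
    (hbot : Tendsto f (comap re atBot ⊓ 𝓟 (im ⁻¹' Set.uIcc c d)) (𝓝 p))
    (htop : Tendsto f (comap re atTop ⊓ 𝓟 (im ⁻¹' Set.uIcc c d)) (𝓝 q)) :
    Tendsto (fun R : ℝ ↦ ∫ x in -R..R, (f (x + c * I) - f (x + d * I))) atTop
      (𝓝 (I • (d - c) • (p - q))) := by
  have hedge {e : ℝ} (he : e ∈ Set.uIcc c d) : Continuous fun x : ℝ ↦ f (x + e * I) :=
    hf.continuousOn.comp_continuous (by fun_prop) fun x ↦ by simpa using he
  have hrect (R : ℝ) : ∫ x in -R..R, (f (x + c * I) - f (x + d * I)) =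
      I • ((∫ y in c..d, f ((-R : ℝ) + y * I)) - ∫ y in c..d, f (R + y * I)) := by
    rw [intervalIntegral.integral_sub ((hedge Set.left_mem_uIcc).intervalIntegrable _ _)
      ((hedge Set.right_mem_uIcc).intervalIntegrable _ _), ← sub_eq_zero, smul_sub,
      ← integral_boundary_rect_eq_zero_of_differentiableOn f ⟨-R, c⟩ ⟨R, d⟩
        (hf.mono Set.inter_subset_right)]
    abel
  simp only [hrect, smul_sub]
  exact (((tendsto_intervalIntegral_vertical hf.continuousOn hbot).comp
    tendsto_neg_atTop_atBot).const_smul I).sub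
    ((tendsto_intervalIntegral_vertical hf.continuousOn htop).const_smul I)

end Strip

theorem mem_im_preimage_uIcc_neg {θ : ℝ} (hθ : 0 ≤ θ) {u : ℂ} :
    u ∈ im ⁻¹' Set.uIcc (-θ) θ ↔ |u.im| ≤ θ := by
  rw [Set.mem_preimage, Set.uIcc_of_le (neg_le_self hθ), Set.mem_Icc, abs_le]

/-- The Fermi–Dirac function `1 / (1 + exp u)`: the function `1 / (1 + w)` in the logarithmic
coordinate `w = exp u`. -/
noncomputable def fermiDirac (u : ℂ) : ℂ := (1 + exp u)⁻¹

theorem one_add_exp_ne_zero {u : ℂ} (hu : |u.im| < π) : 1 + exp u ≠ 0 := by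
  intro h
  obtain ⟨hlo, hhi⟩ := abs_lt.1 hu
  have hlog : u = π * I := by
    rw [← log_exp hlo hhi.le, eq_neg_of_add_eq_zero_right h, log_neg_one]
  exact hhi.ne (by simp [hlog])

theorem differentiableAt_fermiDirac {u : ℂ} (hu : |u.im| < π) :
    DifferentiableAt ℂ fermiDirac u :=
  .inv (by fun_prop) (one_add_exp_ne_zero hu)

theorem tendsto_fermiDirac_comap_re_atBot : Tendsto fermiDirac (comap re atBot) (𝓝 1) := by
  simpa using! (tendsto_exp_comap_re_atBot.const_add 1).inv₀ (by simp)

theorem tendsto_fermiDirac_comap_re_atTop : Tendsto fermiDirac (comap re atTop) (𝓝 0) :=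
  tendsto_inv₀_cobounded.comp ((tendsto_const_add_cobounded 1).comp tendsto_exp_comap_re_atTop)

section FermiDiracLine

variable {b : ℂ}

theorem continuous_fermiDirac_sub (hb : |b.im| < π) :
    Continuous fun x : ℝ ↦ fermiDirac (b - x) :=
  continuous_iff_continuousAt.2 fun x ↦
    (differentiableAt_fermiDirac (by simpa using hb)).continuousAt.comp (by fun_prop)

theorem tendsto_fermiDirac_sub_atBot (b : ℂ) :
    Tendsto (fun x : ℝ ↦ fermiDirac (b - x)) atBot (𝓝 0) :=
  tendsto_fermiDirac_comap_re_atTop.comp (tendsto_comap_iff.2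
    (by simpa [Function.comp_def, sub_eq_add_neg] using
      tendsto_atTop_add_const_left atBot b.re tendsto_neg_atBot_atTop))

theorem tendsto_fermiDirac_sub_atTop (b : ℂ) :
    Tendsto (fun x : ℝ ↦ fermiDirac (b - x)) atTop (𝓝 1) :=
  tendsto_fermiDirac_comap_re_atBot.comp (tendsto_comap_iff.2
    (by simpa [Function.comp_def, sub_eq_add_neg] using
      tendsto_atBot_add_const_left atTop b.re tendsto_neg_atTop_atBot))

theorem integrable_fermiDirac_sub_mul {g : ℝ → ℂ} (hb : |b.im| < π) (hg : Integrable g) :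
    Integrable fun x : ℝ ↦ fermiDirac (b - x) * g x := by
  have hO {l : Filter ℝ} {p : ℂ} (hl : Tendsto (fun x : ℝ ↦ fermiDirac (b - x)) l (𝓝 p)) :
      (fun x : ℝ ↦ fermiDirac (b - x) * g x) =O[l] g := by
    simpa using (hl.isBigO_one ℂ).mul (Asymptotics.isBigO_refl g l)
  have hloc : LocallyIntegrable fun x : ℝ ↦ fermiDirac (b - x) * g x :=
    hg.locallyIntegrable.continuous_mul (continuous_fermiDirac_sub hb)
  exact hloc.integrable_of_isBigO_atBot_atTop
    (hO (tendsto_fermiDirac_sub_atBot b)) (hg.integrableAtFilter _)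
    (hO (tendsto_fermiDirac_sub_atTop b)) (hg.integrableAtFilter _)

end FermiDiracLine

theorem fermiDirac_conj (u : ℂ) :
    fermiDirac (starRingEnd ℂ u) = starRingEnd ℂ (fermiDirac u) := by
  simp [fermiDirac, exp_conj]

theorem fermiDirac_sub_eq_div_add (u v : ℂ) : fermiDirac (u - v) = exp v / (exp v + exp u) := by
  rw [fermiDirac, exp_sub]
  field_simp [exp_ne_zero]

/-- The jump of `1 / (1 + w)` from `w = t * exp (θ * I)` to `w = t * exp (-θ * I)`, divided by
`2 * I`. The density `ρ` of the theorem satisfies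
`π * x * ρ x = rayJump (π / (r + 1)) (x ^ (1 / (r + 1)))`. -/
noncomputable def rayJump (θ t : ℝ) : ℝ :=
  t * Real.sin θ / (1 + 2 * t * Real.cos θ + t ^ 2)

theorem fermiDirac_sub_eq_rayJump (θ x : ℝ) :
    fermiDirac (x - θ * I) - fermiDirac (x + θ * I) = 2 * I * rayJump θ (Real.exp x) := by
  have hconj : (x + θ * I : ℂ) = starRingEnd ℂ (x - θ * I) := by simp
  have him : (fermiDirac (x - θ * I)).im = rayJump θ (Real.exp x) := by
    rw [fermiDirac, inv_im, normSq_apply, rayJump]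
    congr 1
    · simp [exp_im]
    · simp only [add_re, one_re, add_im, one_im, exp_re, exp_im, sub_re, sub_im, ofReal_re,
        ofReal_im, re_ofReal_mul, im_ofReal_mul, I_re, I_im, mul_zero, mul_one, sub_zero, zero_sub,
        Real.cos_neg, Real.sin_neg]
      linear_combination Real.exp x ^ 2 * Real.sin_sq_add_cos_sq θ
  rw [hconj, fermiDirac_conj, sub_conj, him]
  push_cast
  ring

section RayJump

variable {θ : ℝ}

theorem one_add_two_mul_cos_add_sq (θ t : ℝ) :
    1 + 2 * t * Real.cos θ + t ^ 2 = (t + Real.cos θ) ^ 2 + Real.sin θ ^ 2 := by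
  linear_combination -Real.sin_sq_add_cos_sq θ

theorem continuous_rayJump (hθ : Real.sin θ ≠ 0) : Continuous (rayJump θ) :=
  .div (by fun_prop) (by fun_prop) fun t ↦ by
    rw [one_add_two_mul_cos_add_sq]
    positivity

theorem rayJump_nonneg (hθ : 0 ≤ Real.sin θ) {t : ℝ} (ht : 0 ≤ t) : 0 ≤ rayJump θ t := by
  rw [rayJump, one_add_two_mul_cos_add_sq]
  positivity

theorem tendsto_intervalIntegral_rayJump_exp (hθ : 0 < θ) (hθπ : θ < π) :
    Tendsto (fun R : ℝ ↦ ∫ x in -R..R, rayJump θ (Real.exp x)) atTop (𝓝 θ) := by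
  have hdiff : DifferentiableOn ℂ fermiDirac (im ⁻¹' Set.uIcc (-θ) θ) := fun u hu ↦
    (differentiableAt_fermiDirac (((mem_im_preimage_uIcc_neg hθ.le).1 hu).trans_lt
      hθπ)).differentiableWithinAt
  have hlim := tendsto_intervalIntegral_sub_of_differentiableOn_strip hdiff
    (tendsto_fermiDirac_comap_re_atBot.mono_left inf_le_left)
    (tendsto_fermiDirac_comap_re_atTop.mono_left inf_le_left)
  simp only [ofReal_neg, neg_mul, ← sub_eq_add_neg, fermiDirac_sub_eq_rayJump,
    intervalIntegral.integral_const_mul, intervalIntegral.integral_ofReal] at hlim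
  rw [← tendsto_ofReal_iff]
  convert hlim.const_mul (2 * I)⁻¹ using 2
  · field_simp [I_ne_zero]
  · simp only [smul_eq_mul, real_smul]
    push_cast
    field_simp [I_ne_zero]
    ring

theorem integrable_rayJump_exp (hθ : 0 < θ) (hθπ : θ < π) :
    Integrable fun x ↦ rayJump θ (Real.exp x) := by
  have hsin : 0 < Real.sin θ := Real.sin_pos_of_pos_of_lt_pi hθ hθπ
  have hcont : Continuous fun x ↦ rayJump θ (Real.exp x) :=
    (continuous_rayJump hsin.ne').comp Real.continuous_exp
  refine integrable_of_intervalIntegral_norm_tendsto θ (fun R ↦ hcont.integrableOn_Ioc)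
    tendsto_neg_atTop_atBot tendsto_id ?_
  simpa only [Real.norm_of_nonneg (rayJump_nonneg hsin.le (Real.exp_pos _).le)] using!
    tendsto_intervalIntegral_rayJump_exp hθ hθπ

end RayJump

/-- The kernel `(F u - F b) / (1 - exp (b - u))`, with its removable singularity at `u = b`
filled in. -/
noncomputable def stripKernel (F : ℂ → ℂ) (b u : ℂ) : ℂ :=
  dslope F b u / dslope (fun v ↦ 1 - exp (b - v)) b u

section StripKernel

variable {F : ℂ → ℂ} {b p : ℂ}

theorem stripKernel_of_ne (F : ℂ → ℂ) {u : ℂ} (hu : u ≠ b) :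
    stripKernel F b u = (F u - F b) / (1 - exp (b - u)) := by
  rw [stripKernel, dslope_of_ne _ hu, dslope_of_ne _ hu, slope_def_field, slope_def_field,
    div_div_div_cancel_right₀ (sub_ne_zero.2 hu)]
  simp

theorem exp_ne_one_of_abs_im_lt {u : ℂ} (hne : u ≠ 0) (hu : |u.im| < 2 * π) : exp u ≠ 1 := by
  intro h
  obtain ⟨n, rfl⟩ := exp_eq_one_iff.1 h
  have hn : |(n : ℝ)| * (2 * π) < 1 * (2 * π) := by
    simpa [abs_mul, abs_of_pos Real.pi_pos] using hu
  have hn0 : n = 0 :=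
    Int.abs_lt_one_iff.1 (by exact_mod_cast lt_of_mul_lt_mul_right hn Real.two_pi_pos.le)
  simp [hn0] at hne

theorem dslope_one_sub_exp_ne_zero {u : ℂ} (hu : |(b - u).im| < 2 * π) :
    dslope (fun v ↦ 1 - exp (b - v)) b u ≠ 0 := by
  rcases eq_or_ne u b with rfl | hne
  · simp [dslope_same, deriv_comp_const_sub]
  · rw [dslope_of_ne _ hne, slope_def_field]
    refine div_ne_zero ?_ (sub_ne_zero.2 hne)
    simpa [sub_eq_zero] using (exp_ne_one_of_abs_im_lt (sub_ne_zero.2 hne.symm) hu).symm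

theorem differentiableOn_stripKernel {s : Set ℂ} (hs : s ∈ 𝓝 b)
    (hsb : ∀ u ∈ s, |(b - u).im| < 2 * π) (hF : DifferentiableOn ℂ F s) :
    DifferentiableOn ℂ (stripKernel F b) s :=
  .div ((differentiableOn_dslope hs).2 hF) ((differentiableOn_dslope hs).2 (by fun_prop))
    fun u hu ↦ dslope_one_sub_exp_ne_zero (hsb u hu)

theorem tendsto_stripKernel_atBot {s : Set ℂ} (hF : Tendsto F (comap re atBot ⊓ 𝓟 s) (𝓝 p)) :
    Tendsto (stripKernel F b) (comap re atBot ⊓ 𝓟 s) (𝓝 0) := by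
  have hexp : Tendsto (fun u ↦ exp (u - b)) (comap re atBot ⊓ 𝓟 s) (𝓝 0) := by
    simpa [exp_sub] using (tendsto_exp_comap_re_atBot.mono_left inf_le_left).div_const (exp b)
  have hlim : Tendsto (fun u ↦ (F u - F b) * (exp (u - b) / (exp (u - b) - 1)))
      (comap re atBot ⊓ 𝓟 s) (𝓝 0) := by
    simpa using (hF.sub_const (F b)).mul (hexp.div (hexp.sub_const 1) (by simp))
  refine hlim.congr' ?_
  filter_upwards [hexp.eventually_ne zero_ne_one] with u hu
  rw [stripKernel_of_ne F (by rintro rfl; simp at hu), ← neg_sub u b, exp_neg]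
  field_simp [exp_ne_zero]

theorem tendsto_stripKernel_atTop {s : Set ℂ} (hF : Tendsto F (comap re atTop ⊓ 𝓟 s) (𝓝 p)) :
    Tendsto (stripKernel F b) (comap re atTop ⊓ 𝓟 s) (𝓝 (p - F b)) := by
  have hexp : Tendsto (fun u ↦ exp (b - u)) (comap re atTop ⊓ 𝓟 s) (𝓝 0) := by
    simpa [exp_sub, div_eq_mul_inv, Function.comp_def] using
      ((tendsto_inv₀_cobounded.comp tendsto_exp_comap_re_atTop).mono_left inf_le_left).const_mul
        (exp b)
  have hlim : Tendsto (fun u ↦ (F u - F b) / (1 - exp (b - u))) (comap re atTop ⊓ 𝓟 s)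
      (𝓝 (p - F b)) := by
    simpa using! (hF.sub_const (F b)).div (hexp.const_sub 1) (by simp)
  refine hlim.congr' ?_
  filter_upwards [hexp.eventually_ne zero_ne_one] with u hu
  rw [stripKernel_of_ne F (by rintro rfl; simp at hu)]

theorem stripKernel_sub (F : ℂ → ℂ) (hb : |b.im| < π) (x : ℝ) :
    stripKernel F b (x - π * I) - stripKernel F b (x + π * I) =
      fermiDirac (b - x) * (F (x - π * I) - F (x + π * I)) := by
  obtain ⟨hlo, hhi⟩ := abs_lt.1 hb
  have hlower : (x - π * I : ℂ) ≠ b := fun h ↦ hlo.ne (by simp [← h])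
  have hupper : (x + π * I : ℂ) ≠ b := fun h ↦ hhi.ne' (by simp [← h])
  rw [stripKernel_of_ne F hlower, stripKernel_of_ne F hupper, ← sub_add, exp_add_pi_mul_I,
    ← sub_sub, exp_sub_pi_mul_I, sub_neg_eq_add, fermiDirac]
  ring

theorem tendsto_intervalIntegral_fermiDirac_mul_sub {q : ℂ} (hb : |b.im| < π)
    (hF : DifferentiableOn ℂ F (im ⁻¹' Set.uIcc (-π) π))
    (hbot : Tendsto F (comap re atBot ⊓ 𝓟 (im ⁻¹' Set.uIcc (-π) π)) (𝓝 p))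
    (htop : Tendsto F (comap re atTop ⊓ 𝓟 (im ⁻¹' Set.uIcc (-π) π)) (𝓝 q)) :
    Tendsto (fun R : ℝ ↦ ∫ x in -R..R, fermiDirac (b - x) * (F (x - π * I) - F (x + π * I)))
      atTop (𝓝 (2 * π * I * (F b - q))) := by
  have hnhds : im ⁻¹' Set.uIcc (-π) π ∈ 𝓝 b := by
    filter_upwards [continuous_im.abs.continuousAt.eventually_lt_const hb] with u hu
    exact (mem_im_preimage_uIcc_neg Real.pi_pos.le).2 hu.le
  have hdist (u : ℂ) (hu : u ∈ im ⁻¹' Set.uIcc (-π) π) : |(b - u).im| < 2 * π := by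
    have hu' := (mem_im_preimage_uIcc_neg Real.pi_pos.le).1 hu
    rw [sub_im]
    linarith [abs_sub b.im u.im]
  have hlim := tendsto_intervalIntegral_sub_of_differentiableOn_strip
    (differentiableOn_stripKernel hnhds hdist hF)
    (tendsto_stripKernel_atBot hbot) (tendsto_stripKernel_atTop htop)
  simp only [ofReal_neg, neg_mul, ← sub_eq_add_neg, stripKernel_sub F hb] at hlim
  convert hlim using 2
  simp only [smul_eq_mul, real_smul]
  push_cast
  ring

end StripKernel

section Representation

variable {a : ℝ} {b : ℂ}

theorem tendsto_intervalIntegral_fermiDirac_mul_rayJump (ha : 0 < a) (ha1 : a < 1)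
    (hb : |b.im| < π) :
    Tendsto (fun R : ℝ ↦ ∫ x in -R..R, fermiDirac (b - x) * rayJump (π * a) (Real.exp (a * x)))
      atTop (𝓝 (π * fermiDirac (a * b))) := by
  have hdiff : DifferentiableOn ℂ (fun u ↦ fermiDirac (a * u)) (im ⁻¹' Set.uIcc (-π) π) := by
    intro u hu
    have him : |((a : ℂ) * u).im| < π := calc
      |((a : ℂ) * u).im| = a * |u.im| := by rw [im_ofReal_mul, abs_mul, abs_of_pos ha]
      _ ≤ a * π := by gcongr; exact (mem_im_preimage_uIcc_neg Real.pi_pos.le).1 hu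
      _ < π := mul_lt_of_lt_one_left Real.pi_pos ha1
    exact ((differentiableAt_fermiDirac him).comp u (by fun_prop)).differentiableWithinAt
  have hscale {l : Filter ℝ} (hl : Tendsto (a * ·) l l) :
      Tendsto (fun u : ℂ ↦ (a : ℂ) * u) (comap re l) (comap re l) :=
    tendsto_comap_iff.2 (by simpa [Function.comp_def] using hl.comp tendsto_comap)
  have hlim := tendsto_intervalIntegral_fermiDirac_mul_sub hb hdiff
    ((tendsto_fermiDirac_comap_re_atBot.comp
      (hscale (tendsto_id.const_mul_atBot ha))).mono_left inf_le_left)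
    ((tendsto_fermiDirac_comap_re_atTop.comp
      (hscale (tendsto_id.const_mul_atTop ha))).mono_left inf_le_left)
  have hjump (x : ℝ) : fermiDirac (a * (x - π * I)) - fermiDirac (a * (x + π * I)) =
      2 * I * rayJump (π * a) (Real.exp (a * x)) := by
    rw [← fermiDirac_sub_eq_rayJump]
    push_cast
    ring_nf
  simp only [hjump, mul_left_comm (fermiDirac _), intervalIntegral.integral_const_mul,
    sub_zero] at hlim
  convert hlim.const_mul (2 * I)⁻¹ using 2 <;> field_simp [I_ne_zero]

theorem integrable_fermiDirac_mul_rayJump (ha : 0 < a) (ha1 : a < 1) (hb : |b.im| < π) :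
    Integrable fun x : ℝ ↦ fermiDirac (b - x) * rayJump (π * a) (Real.exp (a * x)) :=
  integrable_fermiDirac_sub_mul hb ((integrable_rayJump_exp (by positivity)
    (mul_lt_of_lt_one_right Real.pi_pos ha1)).comp_mul_left' ha.ne').ofReal

theorem integral_fermiDirac_mul_rayJump (ha : 0 < a) (ha1 : a < 1) (hb : |b.im| < π) :
    ∫ x : ℝ, fermiDirac (b - x) * rayJump (π * a) (Real.exp (a * x)) =
      π * fermiDirac (a * b) :=
  tendsto_nhds_unique
    (intervalIntegral_tendsto_integral (integrable_fermiDirac_mul_rayJump ha ha1 hb)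
      tendsto_neg_atTop_atBot tendsto_id)
    (tendsto_intervalIntegral_fermiDirac_mul_rayJump ha ha1 hb)

end Representation

theorem integral_exp_smul_comp_exp {E : Type*} [NormedAddCommGroup E] [NormedSpace ℝ E]
    (g : ℝ → E) : ∫ x, Real.exp x • g (Real.exp x) = ∫ y in Set.Ioi 0, g y := by
  rw [← Real.range_exp, ← Set.image_univ, integral_image_eq_integral_abs_deriv_smul .univ
    (fun x _ ↦ (Real.hasDerivAt_exp x).hasDerivWithinAt) Real.exp_injective.injOn]
  simp

theorem integral_rayJump_rpow_div_add {a : ℝ} (ha : 0 < a) (ha1 : a < 1) {z : ℂ}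
    (hz : z ∈ slitPlane) :
    ∫ l in Set.Ioi (0 : ℝ), (rayJump (π * a) (l ^ a) : ℂ) / (l + z) =
      π / (1 + z ^ (a : ℂ)) := by
  have hlog : |(log z).im| < π := by
    rw [log_im]
    exact abs_lt.2 ⟨neg_pi_lt_arg z, (arg_le_pi z).lt_of_ne (slitPlane_arg_ne_pi hz)⟩
  rw [cpow_def_of_ne_zero (slitPlane_ne_zero hz), mul_comm (log z), div_eq_mul_inv,
    ← fermiDirac, ← integral_fermiDirac_mul_rayJump ha ha1 hlog, ← integral_exp_smul_comp_exp]
  refine integral_congr_ae (.of_forall fun x ↦ ?_)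
  simp only [fermiDirac_sub_eq_div_add, exp_log (slitPlane_ne_zero hz), ← Real.exp_mul,
    mul_comm x, real_smul, ofReal_exp]
  ring

theorem mul_density_eq_rayJump_div_pi (r : ℝ) {l : ℝ} (hl : 0 < l) :
    l * ((1 / (Real.pi * l)) *
        (l ^ ((1 : ℝ) / (r + 1)) * Real.sin (Real.pi / (r + 1))) /
      (1 + 2 * l ^ ((1 : ℝ) / (r + 1)) * Real.cos (Real.pi / (r + 1)) +
        l ^ ((2 : ℝ) / (r + 1)))) =
      rayJump (Real.pi * (1 / (r + 1))) (l ^ (1 / (r + 1))) / Real.pi := by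
  have hsq : l ^ ((2 : ℝ) / (r + 1)) = (l ^ (1 / (r + 1))) ^ 2 := by
    rw [← Real.rpow_mul_natCast hl.le]
    congr 1
    push_cast
    ring
  rw [hsq, rayJump, mul_one_div]
  field_simp

theorem global_density_stieltjes_general (r : ℝ) (hr : 0 < r) (z : ℂ) (hz : z ∈ slitPlane) :
    ∫ l in Set.Ioi (0 : ℝ),
        ((l * ((1 / (Real.pi * l)) *
            (l ^ ((1 : ℝ) / (r + 1)) * Real.sin (Real.pi / (r + 1))) /
          (1 + 2 * l ^ ((1 : ℝ) / (r + 1)) * Real.cos (Real.pi / (r + 1)) +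
            l ^ ((2 : ℝ) / (r + 1)))) : ℝ) : ℂ) / (l + z) =
      1 / (1 + z ^ (((1 : ℝ) / (r + 1) : ℝ) : ℂ)) := by
  have ha : 0 < 1 / (r + 1) := by positivity
  have ha1 : 1 / (r + 1) < 1 := (div_lt_one (by positivity)).2 (by linarith)
  calc
    _ = ∫ l in Set.Ioi (0 : ℝ),
          (rayJump (Real.pi * (1 / (r + 1))) (l ^ (1 / (r + 1))) : ℂ) / (l + z) / Real.pi :=
      setIntegral_congr_fun measurableSet_Ioi fun l hl ↦ by
        simp only [mul_density_eq_rayJump_div_pi r hl, ofReal_div, div_right_comm]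
    _ = _ := by
      rw [integral_div, integral_rayJump_rpow_div_add ha ha1 hz, div_div_cancel_left'
        (ofReal_ne_zero.2 Real.pi_ne_zero)]
      exact (one_div _).symm

/-- The `r = s` global density satisfies the Stieltjes-transform identity
`∫_0^∞ λ ρ(λ)/(λ + z) dλ = 1/(1 + z^{1/(r+1)})` for all real `z > 0`. -/
theorem global_density_stieltjes (r : ℕ) (hr : 1 ≤ r) (z : ℝ) (hz : 0 < z) :
    ∫ l in Set.Ioi (0 : ℝ),
        l * ((1 / (Real.pi * l)) *
            (l ^ ((1 : ℝ) / ((r : ℝ) + 1)) * Real.sin (Real.pi / ((r : ℝ) + 1))) /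
          (1 + 2 * l ^ ((1 : ℝ) / ((r : ℝ) + 1)) * Real.cos (Real.pi / ((r : ℝ) + 1)) +
            l ^ ((2 : ℝ) / ((r : ℝ) + 1)))) / (l + z) =
      1 / (1 + z ^ ((1 : ℝ) / ((r : ℝ) + 1))) := by
  have h := global_density_stieltjes_general r (mod_cast hr) z (ofReal_mem_slitPlane.2 hz)
  exact_mod_cast ofReal_cpow hz.le _ ▸ h
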